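/- arXiv:1605.05721 — 2 statements merged into one kernel-verified Lean document; each statement's English description precedes it below -/
import Mathlib

section
/- Fix real numbers μ, λ ≠ 0, and t < 0. For each positive integer k, let X_k be a normal random variable with mean μ and variance λ²/k. Then k · Var(e^{t X_k²}) → 4 μ² λ² t² e^{2μ²t} as k → ∞, where Var(e^{t X_k²}) = (1 − 4λ²t/k)^{−1/2} exp(2μ²t/(1 − 4λ²t/k)) − (1 − 2λ²t/k)^{−1} exp(2μ²t/(1 − 2λ²t/k)). -/
open MeasureTheory ProbabilityTheory Real Filter Topology

theorem mgf_sq_aux (μ s v : ℝ) (hv : 0 < v) (hs : s < 0) :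
    ∫ x, Real.exp (s * x ^ 2) ∂(gaussianReal μ (Real.toNNReal v))
      = (√(1 - 2 * v * s))⁻¹ * Real.exp (μ ^ 2 * s / (1 - 2 * v * s)) := by
  have hD : 0 < 1 - 2 * v * s := by nlinarith [mul_pos hv (neg_pos.2 hs)]
  have hv0 : Real.toNNReal v ≠ 0 := by simpa using hv
  set D := 1 - 2 * v * s with hDdef
  have hvD : 0 < v / D := by positivity
  have hvD0 : Real.toNNReal (v / D) ≠ 0 := by simpa using hvD
  rw [integral_gaussianReal_eq_integral_smul hv0]
  have key : ∀ x : ℝ, gaussianPDFReal μ (Real.toNNReal v) x • Real.exp (s * x ^ 2)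
      = ((√D)⁻¹ * Real.exp (μ ^ 2 * s / D)) *
        gaussianPDFReal (μ / D) (Real.toNNReal (v / D)) x := by
    intro x
    simp only [gaussianPDFReal, Real.coe_toNNReal v hv.le, Real.coe_toNNReal _ hvD.le, smul_eq_mul]
    have h1 : (√(2 * π * v))⁻¹ = (√D)⁻¹ * (√(2 * π * (v / D)))⁻¹ := by
      rw [← mul_inv, ← Real.sqrt_mul hD.le]
      congr 2
      field_simp
    have h2 : -(x - μ) ^ 2 / (2 * v) + s * x ^ 2
        = μ ^ 2 * s / D + -(x - μ / D) ^ 2 / (2 * (v / D)) := by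
      have hs' : s = (1 - D) / (2 * v) := by rw [hDdef]; field_simp; ring
      rw [hs']
      clear_value D
      field_simp
      ring
    rw [h1, mul_assoc, ← Real.exp_add, h2, Real.exp_add]
    ring
  simp_rw [key]
  rw [integral_const_mul, integral_gaussianPDFReal_eq_one _ hvD0, mul_one]

theorem deriv_aux (m a : ℝ) :
    HasDerivAt (fun u : ℝ => (1 - 4 * a * u) ^ (-(1 : ℝ) / 2) * Real.exp (m / (1 - 4 * a * u))
      - (1 - 2 * a * u)⁻¹ * Real.exp (m / (1 - 2 * a * u))) (2 * a * m * Real.exp m) 0 := by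
  have hl : ∀ c : ℝ, HasDerivAt (fun u : ℝ => 1 - c * u) (-c) 0 := by
    intro c
    simpa using ((hasDerivAt_id (0 : ℝ)).const_mul c).const_sub 1
  have he : ∀ c : ℝ, HasDerivAt (fun u : ℝ => Real.exp (m / (1 - c * u)))
      (Real.exp m * (m * c)) 0 := by
    intro c
    have := ((hasDerivAt_const (0 : ℝ) m).div (hl c) (by simp)).exp
    simpa using this
  have h1 := ((hl (4 * a)).rpow_const (p := -(1 : ℝ) / 2) (by simp)).mul (he (4 * a))
  have h2 := ((hl (2 * a)).inv (by simp)).mul (he (2 * a))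
  refine (h1.sub h2).congr_deriv ?_
  simp
  ring

/-- **Asymptotic variance in Theorem 4.** For `μ, λ ≠ 0, t < 0` and `X_k ~ N(μ, λ²/k)`,
the variance of `e^{t X_k²}` equals the stated closed form, and
`k · Var(e^{t X_k²}) → 4 μ² λ² t² e^{2μ²t}` as `k → ∞`. -/
theorem stmt_17 (μ lam t : ℝ) (hlam : lam ≠ 0) (ht : t < 0)
    (V : ℕ → ℝ)
    (hV : ∀ k : ℕ, 1 ≤ k →
      V k = (∫ x, Real.exp (t * x ^ 2) ^ 2 ∂(gaussianReal μ (Real.toNNReal (lam ^ 2 / k))))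
        - (∫ x, Real.exp (t * x ^ 2) ∂(gaussianReal μ (Real.toNNReal (lam ^ 2 / k)))) ^ 2) :
    (∀ k : ℕ, 1 ≤ k →
      V k = (1 - 4 * lam ^ 2 * t / k) ^ (-(1 : ℝ) / 2)
              * Real.exp (2 * μ ^ 2 * t / (1 - 4 * lam ^ 2 * t / k))
            - (1 - 2 * lam ^ 2 * t / k)⁻¹
              * Real.exp (2 * μ ^ 2 * t / (1 - 2 * lam ^ 2 * t / k))) ∧
    Tendsto (fun k : ℕ => (k : ℝ) * V k) atTop
      (𝓝 (4 * μ ^ 2 * lam ^ 2 * t ^ 2 * Real.exp (2 * μ ^ 2 * t))) := by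
  have hA : ∀ k : ℕ, 1 ≤ k →
      V k = (1 - 4 * lam ^ 2 * t / k) ^ (-(1 : ℝ) / 2)
              * Real.exp (2 * μ ^ 2 * t / (1 - 4 * lam ^ 2 * t / k))
            - (1 - 2 * lam ^ 2 * t / k)⁻¹
              * Real.exp (2 * μ ^ 2 * t / (1 - 2 * lam ^ 2 * t / k)) := by
    intro k hk
    have hk0 : (0 : ℝ) < k := by exact_mod_cast hk
    have hv : 0 < lam ^ 2 / k := by positivity
    have hsq : ∀ x : ℝ, Real.exp (t * x ^ 2) ^ 2 = Real.exp ((2 * t) * x ^ 2) := by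
      intro x
      rw [← Real.exp_nat_mul]
      congr 1
      push_cast
      ring
    rw [hV k hk]
    simp_rw [hsq]
    rw [mgf_sq_aux μ (2 * t) _ hv (by linarith), mgf_sq_aux μ t _ hv ht]
    have e4 : 1 - 2 * (lam ^ 2 / k) * (2 * t) = 1 - 4 * lam ^ 2 * t / k := by ring
    have e2 : 1 - 2 * (lam ^ 2 / k) * t = 1 - 2 * lam ^ 2 * t / k := by ring
    have p4 : 0 < 1 - 4 * lam ^ 2 * t / k := by
      rw [← e4]; nlinarith [mul_pos hv (neg_pos.2 ht)]
    have p2 : 0 < 1 - 2 * lam ^ 2 * t / k := by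
      rw [← e2]; nlinarith [mul_pos hv (neg_pos.2 ht)]
    rw [e4, e2, mul_pow, inv_pow, Real.sq_sqrt p2.le, ← Real.exp_nat_mul, neg_div,
      Real.rpow_neg p4.le, ← Real.sqrt_eq_rpow]
    congr 3
    · congr 1; ring
    · push_cast; ring
  refine ⟨hA, ?_⟩
  have hd := (deriv_aux (2 * μ ^ 2 * t) (lam ^ 2 * t)).tendsto_slope_zero
  have hseq : Tendsto (fun k : ℕ => ((k : ℝ))⁻¹) atTop (𝓝[≠] 0) := by
    rw [tendsto_nhdsWithin_iff]
    refine ⟨tendsto_inv_atTop_nhds_zero_nat, ?_⟩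
    filter_upwards [eventually_ge_atTop 1] with k hk
    have hk0 : (0 : ℝ) < k := by exact_mod_cast hk
    simpa using hk0.ne'
  have h := hd.comp hseq
  have e : 2 * (lam ^ 2 * t) * (2 * μ ^ 2 * t) * Real.exp (2 * μ ^ 2 * t)
      = 4 * μ ^ 2 * lam ^ 2 * t ^ 2 * Real.exp (2 * μ ^ 2 * t) := by ring
  rw [e] at h
  refine h.congr' ?_
  filter_upwards [eventually_ge_atTop 1] with k hk
  rw [hA k hk]
  have e4 : 4 * (lam ^ 2 * t) * (k : ℝ)⁻¹ = 4 * lam ^ 2 * t / k := by ring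
  have e2 : 2 * (lam ^ 2 * t) * (k : ℝ)⁻¹ = 2 * lam ^ 2 * t / k := by ring
  simp [e4, e2]
end

section
/- Let ρ ∈ (−1, 1), γ > 0, and g = (1 − √((1−ρ)/2)) / (1 + √((1−ρ)/2)). For each positive integer k, let S_k be a binomial(k, g) random variable and let X̄_k = S_k/k. With f(x) = exp(−2γ((1−x)/(1+x))²), as k → ∞: E[f(X̄_k)] → e^{−γ(1−ρ)}, and k · Var(f(X̄_k)) → V_{g,γ}, where V_{g,γ} = e^{−2γ(1−ρ)} · 64 γ² · g(1−g)³/(1+g)⁶. -/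
open Filter Topology

noncomputable def bw (g : ℝ) (k s : ℕ) : ℝ := (k.choose s : ℝ) * g ^ s * (1 - g) ^ (k - s)

lemma bw_rec (g : ℝ) (k : ℕ) (h : ℕ → ℝ) :
    ∑ s ∈ Finset.range (k + 2), bw g (k + 1) s * h s =
      ∑ s ∈ Finset.range (k + 1), bw g k s * (g * h (s + 1) + (1 - g) * h s) := by
  have h1 : ∑ s ∈ Finset.range (k + 1), bw g k s * ((1 - g) * h s) =
      ∑ s ∈ Finset.range (k + 2), (k.choose s : ℝ) * g ^ s * (1 - g) ^ (k + 1 - s) * h s := by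
    rw [Finset.sum_range_succ _ (k + 1)]
    simp only [Nat.choose_succ_self, Nat.cast_zero, zero_mul, add_zero]
    refine Finset.sum_congr rfl fun s hs => ?_
    have hs' : s ≤ k := by simpa [Nat.lt_succ_iff] using hs
    rw [Nat.succ_sub hs', pow_succ, bw]; ring
  simp only [mul_add, Finset.sum_add_distrib]
  rw [h1, Finset.sum_range_succ' _ (k + 1), Finset.sum_range_succ' _ (k + 1), ← add_assoc,
    ← Finset.sum_add_distrib]
  congr 1
  · refine Finset.sum_congr rfl fun s hs => ?_
    rw [bw, bw, Nat.choose_succ_succ, Nat.add_sub_add_right]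
    push_cast
    ring
  · simp [bw]

lemma bw_moments (g : ℝ) (k : ℕ) :
    ∑ s ∈ Finset.range (k + 1), bw g k s = 1 ∧
    ∑ s ∈ Finset.range (k + 1), bw g k s * ((s : ℝ) - k * g) = 0 ∧
    ∑ s ∈ Finset.range (k + 1), bw g k s * ((s : ℝ) - k * g) ^ 2 = k * (g * (1 - g)) ∧
    ∑ s ∈ Finset.range (k + 1), bw g k s * ((s : ℝ) - k * g) ^ 3
      = k * (g * (1 - g)) * (1 - 2 * g) ∧
    ∑ s ∈ Finset.range (k + 1), bw g k s * ((s : ℝ) - k * g) ^ 4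
      = k * (g * (1 - g)) * (1 + 3 * (k - 2) * (g * (1 - g))) := by
  induction k with
  | zero => simp [bw]
  | succ k ih =>
    obtain ⟨h0, h1, h2, h3, h4⟩ := ih
    have key : ∀ a0 a1 a2 a3 a4 : ℝ, ∀ h : ℕ → ℝ,
        (∀ s : ℕ, g * h (s + 1) + (1 - g) * h s = a0 + a1 * ((s : ℝ) - k * g)
          + a2 * ((s : ℝ) - k * g) ^ 2 + a3 * ((s : ℝ) - k * g) ^ 3
          + a4 * ((s : ℝ) - k * g) ^ 4) →
        ∑ s ∈ Finset.range (k + 2), bw g (k + 1) s * h s =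
          a0 + a2 * (k * (g * (1 - g))) + a3 * (k * (g * (1 - g)) * (1 - 2 * g))
          + a4 * (k * (g * (1 - g)) * (1 + 3 * (k - 2) * (g * (1 - g)))) := by
      intro a0 a1 a2 a3 a4 h hh
      rw [bw_rec, ← h4, ← h3, ← h2]
      have : a0 = a0 * ∑ s ∈ Finset.range (k + 1), bw g k s + a1 *
        ∑ s ∈ Finset.range (k + 1), bw g k s * ((s : ℝ) - k * g) := by rw [h0, h1]; ring
      conv_rhs => rw [this]
      simp only [Finset.mul_sum, ← Finset.sum_add_distrib]
      refine Finset.sum_congr rfl fun s hs => ?_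
      rw [hh]; ring
    refine ⟨?_, ?_, ?_, ?_, ?_⟩
    · have := key 1 0 0 0 0 (fun _ => 1) (by intro s; ring)
      simpa using this
    · rw [key 0 1 0 0 0 _ (by intro s; push_cast; ring)]; ring
    · rw [key (g * (1 - g)) 0 1 0 0 _ (by intro s; push_cast; ring)]; push_cast; ring
    · rw [key (g * (1 - g) * (1 - 2 * g)) (3 * (g * (1 - g))) 0 1 0 _
        (by intro s; push_cast; ring)]
      push_cast; ring
    · rw [key (g * (1 - g) * (1 - 3 * (g * (1 - g)))) (4 * (g * (1 - g) * (1 - 2 * g)))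
        (6 * (g * (1 - g))) 0 1 _ (by intro s; push_cast; ring)]
      push_cast; ring

lemma taylor2 (h : ℝ → ℝ) (g : ℝ) (hg : g ∈ Set.Ioo (0 : ℝ) 1) (ha : AnalyticAt ℝ h g)
    (hc : ContinuousOn h (Set.Icc 0 1)) :
    ∃ b C : ℝ, 0 ≤ C ∧ ∀ x ∈ Set.Icc (0 : ℝ) 1, |h x - h g - b * (x - g)| ≤ C * (x - g) ^ 2 := by
  have hn : Set.Icc (0 : ℝ) 1 ∈ 𝓝 g := Icc_mem_nhds hg.1 hg.2
  have hq : ContinuousOn (dslope h g) (Set.Icc 0 1) :=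
    (continuousOn_dslope hn).2 ⟨hc, ha.differentiableAt⟩
  have hqa : AnalyticAt ℝ (dslope h g) g := by
    obtain ⟨p, hp⟩ := ha
    exact ⟨_, hp.has_fpower_series_dslope_fslope⟩
  have hQ : ContinuousOn (dslope (dslope h g) g) (Set.Icc 0 1) :=
    (continuousOn_dslope hn).2 ⟨hq, hqa.differentiableAt⟩
  obtain ⟨C, hC⟩ := isCompact_Icc.exists_bound_of_continuousOn hQ
  refine ⟨dslope h g g, C, (norm_nonneg _).trans (hC 0 (by simp)), fun x hx => ?_⟩
  have e1 := sub_smul_dslope h g x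
  have e2 := sub_smul_dslope (dslope h g) g x
  simp only [smul_eq_mul] at e1 e2
  have : h x - h g - dslope h g g * (x - g) = dslope (dslope h g) g x * (x - g) ^ 2 := by
    linear_combination -e1 - (x - g) * e2
  rw [this, abs_mul, abs_of_nonneg (sq_nonneg (x - g))]
  exact mul_le_mul_of_nonneg_right (hC x hx) (sq_nonneg _)

lemma bw_nonneg (g : ℝ) (hg : g ∈ Set.Ioo (0 : ℝ) 1) (k s : ℕ) : 0 ≤ bw g k s := by
  have := hg.1.le
  have : 0 ≤ 1 - g := by linarith [hg.2]
  unfold bw; positivity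

/-- scaled moments -/
lemma scaled (g : ℝ) (k j : ℕ) (hk : 0 < k) :
    ∑ s ∈ Finset.range (k + 1), bw g k s * ((s : ℝ) / k - g) ^ j =
    (∑ s ∈ Finset.range (k + 1), bw g k s * ((s : ℝ) - k * g) ^ j) / k ^ j := by
  have : (k : ℝ) ≠ 0 := by positivity
  rw [Finset.sum_div]
  refine Finset.sum_congr rfl fun s _ => ?_
  rw [mul_div_assoc, ← div_pow]
  congr 2
  field_simp

lemma mem01 {k s : ℕ} (hs : s ∈ Finset.range (k + 1)) : (s : ℝ) / k ∈ Set.Icc (0 : ℝ) 1 := by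
  have hs' : s ≤ k := by simpa [Nat.lt_succ_iff] using hs
  refine ⟨by positivity, div_le_one_of_le₀ (by exact_mod_cast hs') (by positivity)⟩

lemma general (g : ℝ) (hg : g ∈ Set.Ioo (0 : ℝ) 1) (f : ℝ → ℝ) (ha : AnalyticAt ℝ f g)
    (hc : ContinuousOn f (Set.Icc 0 1)) (E E2 : ℕ → ℝ)
    (hE : ∀ k : ℕ, E k = ∑ s ∈ Finset.range (k + 1), bw g k s * f ((s : ℝ) / k))
    (hE2 : ∀ k : ℕ, E2 k = ∑ s ∈ Finset.range (k + 1), bw g k s * f ((s : ℝ) / k) ^ 2) :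
    Tendsto E atTop (𝓝 (f g)) ∧
    Tendsto (fun k : ℕ => (k : ℝ) * (E2 k - E k ^ 2)) atTop
      (𝓝 ((deriv f g) ^ 2 * (g * (1 - g)))) := by
  have hn : Set.Icc (0 : ℝ) 1 ∈ 𝓝 g := Icc_mem_nhds hg.1 hg.2
  have hq : ContinuousOn (dslope f g) (Set.Icc 0 1) :=
    (continuousOn_dslope hn).2 ⟨hc, ha.differentiableAt⟩
  have hqa : AnalyticAt ℝ (dslope f g) g := by
    obtain ⟨p, hp⟩ := ha
    exact ⟨_, hp.has_fpower_series_dslope_fslope⟩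
  obtain ⟨a, C, hC0, hC⟩ := taylor2 f g hg ha hc
  obtain ⟨b, D, hD0, hD⟩ := taylor2 (fun x => dslope f g x ^ 2) g hg (hqa.pow 2) (hq.pow 2)
  set p := g * (1 - g) with hp
  have hp0 : 0 ≤ p := mul_nonneg hg.1.le (by linarith [hg.2])
  have hp1 : p ≤ 1 := by nlinarith [hg.1, hg.2]
  have hinv : Tendsto (fun k : ℕ => ((k : ℝ))⁻¹) atTop (𝓝 0) := tendsto_inv_atTop_nhds_zero_nat
  -- first bound
  have hb1 : ∀ k : ℕ, 0 < k → |E k - f g| ≤ C * (k : ℝ)⁻¹ := by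
    intro k hk
    have hk' : (0 : ℝ) < k := by exact_mod_cast hk
    obtain ⟨m0, m1, m2, m3, m4⟩ := bw_moments g k
    have s1 := scaled g k 1 hk
    have s2 := scaled g k 2 hk
    simp only [pow_one] at s1
    rw [m1, zero_div] at s1
    rw [m2] at s2
    have : E k - f g = ∑ s ∈ Finset.range (k + 1),
        bw g k s * (f ((s : ℝ) / k) - f g - a * ((s : ℝ) / k - g)) := by
      have e : ∀ s : ℕ, bw g k s * (f ((s : ℝ) / k) - f g - a * ((s : ℝ) / k - g)) =
        bw g k s * f ((s : ℝ) / k) - f g * bw g k s - a * (bw g k s * ((s : ℝ) / k - g)) := by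
        intro s; ring
      simp only [e, Finset.sum_sub_distrib, ← Finset.mul_sum]
      rw [m0, s1, hE]; ring
    rw [this]
    calc _ ≤ ∑ s ∈ Finset.range (k + 1), |bw g k s * (f ((s : ℝ) / k) - f g - a * ((s : ℝ) / k - g))| :=
          Finset.abs_sum_le_sum_abs _ _
      _ ≤ ∑ s ∈ Finset.range (k + 1), C * (bw g k s * ((s : ℝ) / k - g) ^ 2) := by
          refine Finset.sum_le_sum fun s hs => ?_
          rw [abs_mul, abs_of_nonneg (bw_nonneg g hg k s), mul_left_comm]
          exact mul_le_mul_of_nonneg_left (hC _ (mem01 hs)) (bw_nonneg g hg k s)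
      _ = C * (k * p / k ^ 2) := by rw [← Finset.mul_sum, s2]
      _ ≤ C * (k : ℝ)⁻¹ := by
          refine mul_le_mul_of_nonneg_left ?_ hC0
          rw [inv_eq_one_div, div_le_div_iff₀ (by positivity) hk']
          nlinarith [mul_le_mul_of_nonneg_left hp1 (sq_nonneg (k : ℝ))]
  have hb2 : ∀ k : ℕ, 0 < k → |(k : ℝ) * (E2 k - E k ^ 2) - (deriv f g) ^ 2 * p| ≤
      (|b * (p * (1 - 2 * g))| + 4 * D + C ^ 2) * (k : ℝ)⁻¹ := by
    intro k hk
    have hk' : (0 : ℝ) < k := by exact_mod_cast hk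
    have hk1 : (1 : ℝ) ≤ k := by exact_mod_cast hk
    obtain ⟨m0, m1, m2, m3, m4⟩ := bw_moments g k
    have s2 := scaled g k 2 hk
    have s3 := scaled g k 3 hk
    have s4 := scaled g k 4 hk
    rw [m2] at s2
    rw [m3] at s3
    rw [m4] at s4
    set T := ∑ s ∈ Finset.range (k + 1), bw g k s * (((s : ℝ) / k - g) ^ 2 *
      (dslope f g ((s : ℝ) / k) ^ 2 - dslope f g g ^ 2 - b * ((s : ℝ) / k - g))) with hT
    have hTb : |T| ≤ D * (4 / k ^ 2) := by
      calc _ ≤ ∑ s ∈ Finset.range (k + 1), |bw g k s * (((s : ℝ) / k - g) ^ 2 *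
            (dslope f g ((s : ℝ) / k) ^ 2 - dslope f g g ^ 2 - b * ((s : ℝ) / k - g)))| :=
            Finset.abs_sum_le_sum_abs _ _
        _ ≤ ∑ s ∈ Finset.range (k + 1), D * (bw g k s * ((s : ℝ) / k - g) ^ 4) := by
            refine Finset.sum_le_sum fun s hs => ?_
            rw [abs_mul, abs_of_nonneg (bw_nonneg g hg k s), mul_left_comm]
            refine mul_le_mul_of_nonneg_left ?_ (bw_nonneg g hg k s)
            rw [abs_mul, abs_of_nonneg (sq_nonneg _)]
            calc _ ≤ ((s : ℝ) / k - g) ^ 2 * (D * ((s : ℝ) / k - g) ^ 2) :=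
                  mul_le_mul_of_nonneg_left (hD _ (mem01 hs)) (sq_nonneg _)
              _ = _ := by ring
        _ = D * (k * p * (1 + 3 * (k - 2) * p) / k ^ 4) := by rw [← Finset.mul_sum, s4]
        _ ≤ D * (4 / k ^ 2) := by
            refine mul_le_mul_of_nonneg_left ?_ hD0
            rw [div_le_div_iff₀ (by positivity) (by positivity)]
            have h1 : 1 + 3 * ((k : ℝ) - 2) * p ≤ 4 * k := by nlinarith
            have h2 : (k : ℝ) * p * (1 + 3 * ((k : ℝ) - 2) * p) ≤ k * p * (4 * k) :=
              mul_le_mul_of_nonneg_left h1 (by positivity)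
            have h3 : (k : ℝ) * p * (4 * k) ≤ 4 * k ^ 2 := by nlinarith [sq_nonneg (k : ℝ)]
            calc _ ≤ 4 * (k : ℝ) ^ 2 * k ^ 2 :=
                  mul_le_mul_of_nonneg_right (h2.trans h3) (by positivity)
              _ = _ := by ring
    have hsq : ∀ s : ℕ, bw g k s * (((s : ℝ) / k - g) ^ 2 *
      (dslope f g ((s : ℝ) / k) ^ 2 - dslope f g g ^ 2 - b * ((s : ℝ) / k - g))) =
      bw g k s * f ((s : ℝ) / k) ^ 2 - 2 * f g * (bw g k s * f ((s : ℝ) / k)) + f g ^ 2 * bw g k s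
       - dslope f g g ^ 2 * (bw g k s * ((s : ℝ) / k - g) ^ 2)
       - b * (bw g k s * ((s : ℝ) / k - g) ^ 3) := by
      intro s
      have e1 := sub_smul_dslope f g ((s : ℝ) / k)
      rw [smul_eq_mul] at e1
      have e2 : f ((s : ℝ) / k) = f g + ((s : ℝ) / k - g) * dslope f g ((s : ℝ) / k) := by
        rw [e1]; ring
      rw [e2]; ring
    simp only [hsq, Finset.sum_sub_distrib, Finset.sum_add_distrib, ← Finset.mul_sum] at hT
    rw [m0, s2, s3, ← hE, ← hE2, dslope_same] at hT
    have hfin : (k : ℝ) * (E2 k - E k ^ 2) - (deriv f g) ^ 2 * p =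
        b * (p * (1 - 2 * g)) * (k : ℝ)⁻¹ + k * T - k * (E k - f g) ^ 2 := by
      rw [hT]; field_simp; ring
    have hA : |b * (p * (1 - 2 * g)) * (k : ℝ)⁻¹| = |b * (p * (1 - 2 * g))| * (k : ℝ)⁻¹ := by
      rw [abs_mul, abs_of_pos (inv_pos.2 hk')]
    have hB : |k * T| ≤ 4 * D * (k : ℝ)⁻¹ := by
      rw [abs_mul, abs_of_pos hk']
      calc _ ≤ (k : ℝ) * (D * (4 / k ^ 2)) := mul_le_mul_of_nonneg_left hTb hk'.le
        _ = _ := by field_simp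
    have hC' : |k * (E k - f g) ^ 2| ≤ C ^ 2 * (k : ℝ)⁻¹ := by
      rw [abs_mul, abs_of_pos hk', abs_pow]
      calc _ ≤ (k : ℝ) * (C * (k : ℝ)⁻¹) ^ 2 := by
            have := hb1 k hk
            gcongr
        _ = _ := by field_simp
    rw [hfin]
    refine (abs_sub _ _).trans ?_
    have := abs_add_le (b * (p * (1 - 2 * g)) * (k : ℝ)⁻¹) (k * T)
    linarith
  constructor
  · rw [tendsto_iff_norm_sub_tendsto_zero]
    refine squeeze_zero' (.of_forall fun _ => norm_nonneg _)
      ((eventually_gt_atTop 0).mono fun k hk => hb1 k hk) ?_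
    simpa using hinv.const_mul C
  · rw [tendsto_iff_norm_sub_tendsto_zero]
    refine squeeze_zero' (.of_forall fun _ => norm_nonneg _)
      ((eventually_gt_atTop 0).mono fun k hk => hb2 k hk) ?_
    simpa using hinv.const_mul (|b * (p * (1 - 2 * g))| + 4 * D + C ^ 2)

/-- **Theorem 4 (delta-method form).** For `ρ ∈ (-1,1)`, `γ > 0`,
`g = (1 - √((1-ρ)/2))/(1 + √((1-ρ)/2))`, `S_k ~ binomial(k, g)`, `X̄_k = S_k/k` and
`f(x) = exp(-2γ((1-x)/(1+x))²)`: `E[f(X̄_k)] → e^{-γ(1-ρ)}` and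
`k · Var(f(X̄_k)) → V_{g,γ} = e^{-2γ(1-ρ)} · 64γ² · g(1-g)³/(1+g)⁶` as `k → ∞`. -/
theorem stmt_18 (ρ γ : ℝ) (hρ : ρ ∈ Set.Ioo (-1 : ℝ) 1) (hγ : 0 < γ)
    (g : ℝ) (hg : g = (1 - Real.sqrt ((1 - ρ) / 2)) / (1 + Real.sqrt ((1 - ρ) / 2)))
    (f : ℝ → ℝ) (hf : ∀ x, f x = Real.exp (-2 * γ * ((1 - x) / (1 + x)) ^ 2))
    (E E2 : ℕ → ℝ)
    (hE : ∀ k : ℕ, E k = ∑ s ∈ Finset.range (k + 1),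
      (k.choose s : ℝ) * g ^ s * (1 - g) ^ (k - s) * f ((s : ℝ) / k))
    (hE2 : ∀ k : ℕ, E2 k = ∑ s ∈ Finset.range (k + 1),
      (k.choose s : ℝ) * g ^ s * (1 - g) ^ (k - s) * f ((s : ℝ) / k) ^ 2) :
    Tendsto E atTop (𝓝 (Real.exp (-γ * (1 - ρ)))) ∧
    Tendsto (fun k : ℕ => (k : ℝ) * (E2 k - E k ^ 2)) atTop
      (𝓝 (Real.exp (-2 * γ * (1 - ρ)) * 64 * γ ^ 2 * (g * (1 - g) ^ 3 / (1 + g) ^ 6))) := by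
  obtain ⟨h1, h2⟩ := hρ
  set t := Real.sqrt ((1 - ρ) / 2) with ht
  have ht0 : 0 < t := Real.sqrt_pos.2 (by linarith)
  have htsq : t ^ 2 = (1 - ρ) / 2 := Real.sq_sqrt (by linarith)
  have ht1 : t < 1 := by nlinarith
  have hgm : g ∈ Set.Ioo (0 : ℝ) 1 := by
    rw [hg]
    refine ⟨div_pos (by linarith) (by linarith), ?_⟩
    rw [div_lt_one (by linarith)]; linarith
  have hg1 : 1 + g ≠ 0 := by linarith [hgm.1]
  have hgt : (1 - g) / (1 + g) = t := by
    rw [div_eq_iff hg1, hg]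
    have : 1 + t ≠ 0 := by linarith
    field_simp; ring
  have hfe : f = fun x => Real.exp (-2 * γ * ((1 - x) / (1 + x)) ^ 2) := funext hf
  have ha : AnalyticAt ℝ f g := by
    rw [hfe]
    have : AnalyticAt ℝ (fun x : ℝ => (1 - x) / (1 + x)) g :=
      (analyticAt_const.sub analyticAt_id).div (analyticAt_const.add analyticAt_id) hg1
    exact (analyticAt_const.mul (this.pow 2)).rexp
  have hc : ContinuousOn f (Set.Icc 0 1) := by
    rw [hfe]
    have : ContinuousOn (fun x : ℝ => (1 - x) / (1 + x)) (Set.Icc 0 1) :=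
      ContinuousOn.div (by fun_prop) (by fun_prop) (fun x hx => by linarith [hx.1])
    exact (continuousOn_const.mul (this.pow 2)).rexp
  have hfg : f g = Real.exp (-γ * (1 - ρ)) := by
    rw [hf, hgt, htsq]; congr 1; ring
  have hd : deriv f g = f g * (8 * γ * (1 - g) / (1 + g) ^ 3) := by
    have d1 : HasDerivAt (fun x : ℝ => (1 - x) / (1 + x))
        (((-1) * (1 + g) - (1 - g) * 1) / (1 + g) ^ 2) g :=
      ((hasDerivAt_id g).const_sub 1).div ((hasDerivAt_id g).const_add 1) hg1
    have d2 := ((d1.pow 2).const_mul (-2 * γ)).exp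
    have d3 := d2.deriv
    change deriv (fun x => Real.exp (-2 * γ * ((1 - x) / (1 + x)) ^ 2)) g = _ at d3
    rw [← hfe] at d3
    rw [d3, hf]
    simp only [Pi.pow_apply]
    congr 1
    norm_num
    field_simp
    ring
  have := general g hgm f ha hc E E2 hE hE2
  refine ⟨hfg ▸ this.1, ?_⟩
  convert this.2 using 2
  rw [hd, hfg, mul_pow, ← Real.exp_nat_mul]
  have : ((2 : ℕ) : ℝ) * (-γ * (1 - ρ)) = -2 * γ * (1 - ρ) := by push_cast; ring
  rw [this]
  field_simp
  ring
end
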